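/- Let X be a measurable space, let k be a measurable bounded symmetric positive definite kernel on X with RKHS H, and let μ be a finite signed Borel measure on X. Then there exists a unique element λ_μ ∈ H such that ∫_X f dμ = ⟨f, λ_μ⟩_H for all f ∈ H, and λ_μ is given pointwise by λ_μ(u) = ∫_X k(u,x) dμ(x) for all u ∈ X; in particular, ∫_X f(x) dμ(x) = ⟨f, ∫_X k(·,x) dμ(x)⟩_H for every f ∈ H. -/

import Mathlib

open MeasureTheory Filter Topology RealInnerProductSpace

/-- Integral of a real-valued function with respect to a finite signed measure,
defined via the Jordan decomposition. -/
noncomputable def svInt {X : Type*} [MeasurableSpace X]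
    (μ : MeasureTheory.SignedMeasure X) (f : X → ℝ) : ℝ :=
  (∫ x, f x ∂μ.toJordanDecomposition.posPart) - ∫ x, f x ∂μ.toJordanDecomposition.negPart

/-- A feature map with separating range is weakly measurable as soon as its kernel has measurable
sections. -/
theorem measurable_inner_of_measurable_kernel {X H : Type*} [MeasurableSpace X]
    [NormedAddCommGroup H] [InnerProductSpace ℝ H] [CompleteSpace H] {Φ : X → H}
    (hmeas : ∀ y, Measurable fun x => ⟪Φ y, Φ x⟫)
    (hsep : ∀ f : H, (∀ x, ⟪f, Φ x⟫ = 0) → f = 0) (f : H) :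
    Measurable fun x => ⟪f, Φ x⟫ := by
  let M : Submodule ℝ H :=
    { carrier := {f | Measurable fun x => ⟪f, Φ x⟫}
      add_mem' := fun {a b} ha hb => by
        simpa only [Set.mem_ofPred_eq, inner_add_left] using Measurable.fun_add ha hb
      zero_mem' := by simp
      smul_mem' := fun c a ha => by
        simpa only [Set.mem_ofPred_eq, real_inner_smul_left] using Measurable.const_mul ha c }
  have hclosed : IsClosed (M : Set H) := by
    refine IsSeqClosed.isClosed fun u g hu hug => ?_
    refine measurable_of_tendsto_metrizable (f := fun n x => ⟪u n, Φ x⟫) hu ?_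
    exact tendsto_pi_nhds.2 fun x => hug.inner tendsto_const_nhds
  have hperp : Mᗮ = ⊥ := by
    refine (Submodule.eq_bot_iff _).2 fun g hg => hsep g fun x => ?_
    exact (Submodule.mem_orthogonal' M g).1 hg (Φ x) (hmeas x)
  have htop : M = ⊤ := by
    rw [← hclosed.submodule_topologicalClosure_eq]
    exact Submodule.topologicalClosure_eq_top_iff.2 hperp
  have hf : f ∈ M := htop ▸ Submodule.mem_top
  exact hf

/-- A bounded weakly measurable map into a Hilbert space has a weak (Pettis) integral against every
finite measure. -/
theorem exists_integral_inner_eq_inner {X H : Type*} [MeasurableSpace X]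
    [NormedAddCommGroup H] [InnerProductSpace ℝ H] [CompleteSpace H] {Φ : X → H} {C : ℝ}
    (hmeas : ∀ f : H, Measurable fun x => ⟪f, Φ x⟫) (hbdd : ∀ x, ‖Φ x‖ ≤ C)
    (ν : Measure X) [IsFiniteMeasure ν] :
    ∃ m : H, ∀ f : H, ∫ x, ⟪f, Φ x⟫ ∂ν = ⟪f, m⟫ := by
  have hle : ∀ (f : H) (x : X), ‖⟪f, Φ x⟫‖ ≤ ‖f‖ * C := fun f x =>
    (norm_inner_le_norm f (Φ x)).trans (mul_le_mul_of_nonneg_left (hbdd x) (norm_nonneg f))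
  have hint : ∀ f : H, Integrable (fun x => ⟪f, Φ x⟫) ν := fun f =>
    Integrable.of_bound (hmeas f).aestronglyMeasurable (‖f‖ * C) (ae_of_all _ (hle f))
  let L : H →ₗ[ℝ] ℝ :=
    { toFun := fun f => ∫ x, ⟪f, Φ x⟫ ∂ν
      map_add' := fun f g => by
        simp only [inner_add_left]
        exact integral_add (hint f) (hint g)
      map_smul' := fun c f => by
        simp only [real_inner_smul_left, RingHom.id_apply, smul_eq_mul]
        exact integral_const_mul c _ }
  let L' : StrongDual ℝ H := L.mkContinuous (C * ν.real Set.univ) fun f => by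
    calc ‖∫ x, ⟪f, Φ x⟫ ∂ν‖ ≤ ‖f‖ * C * ν.real Set.univ :=
          norm_integral_le_of_norm_le_const (ae_of_all _ (hle f))
      _ = C * ν.real Set.univ * ‖f‖ := by ring
  refine ⟨(InnerProductSpace.toDual ℝ H).symm L', fun f => ?_⟩
  rw [real_inner_comm, InnerProductSpace.toDual_symm_apply]
  rfl

/-- Let `X` be a measurable space, `k` a measurable bounded symmetric
positive definite kernel on `X` with RKHS `H`, and `μ` a finite signed Borel measure on
`X`.  Then there is a unique `λ_μ ∈ H` with `∫ f dμ = ⟪f, λ_μ⟫` for all `f ∈ H`, and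
`λ_μ(u) = ∫ k(u,x) dμ(x)` for all `u ∈ X`; in particular
`∫ f dμ = ⟪f, ∫ k(·,x) dμ(x)⟫` for every `f ∈ H`. -/
theorem stmt19
    {X : Type*} [MeasurableSpace X]
    (k : X → X → ℝ)
    (hkmeas : Measurable fun p : X × X => k p.1 p.2)
    (hkbdd : ∃ C : ℝ, ∀ x y : X, |k x y| ≤ C)
    (hksymm : ∀ x y : X, k x y = k y x)
    {H : Type*} [NormedAddCommGroup H] [InnerProductSpace ℝ H] [CompleteSpace H]
    (T : H →ₗ[ℝ] (X → ℝ)) (hT : Function.Injective T)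
    (Φ : X → H)
    (hk : ∀ x y : X, k x y = ⟪Φ x, Φ y⟫)
    (hrepro : ∀ (f : H) (x : X), T f x = ⟪f, Φ x⟫)
    (μ : MeasureTheory.SignedMeasure X) :
    ∃! lam : H,
      (∀ f : H, svInt μ (T f) = ⟪f, lam⟫) ∧
      (∀ u : X, T lam u = svInt μ (fun x => k u x)) := by
  obtain ⟨C, hC⟩ := hkbdd
  have hmeas : ∀ f : H, Measurable fun x => ⟪f, Φ x⟫ := by
    refine measurable_inner_of_measurable_kernel (fun y => ?_) fun f hf => hT ?_
    · simp only [← hk]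
      exact hkmeas.comp measurable_prodMk_left
    · ext x
      simp [hrepro, hf]
  have hbdd : ∀ x, ‖Φ x‖ ≤ √C := fun x => by
    refine Real.le_sqrt_of_sq_le ?_
    rw [← real_inner_self_eq_norm_sq, ← hk]
    exact (le_abs_self _).trans (hC x x)
  obtain ⟨p, hp⟩ := exists_integral_inner_eq_inner hmeas hbdd μ.toJordanDecomposition.posPart
  obtain ⟨n, hn⟩ := exists_integral_inner_eq_inner hmeas hbdd μ.toJordanDecomposition.negPart
  have hrep : ∀ f : H, svInt μ (T f) = ⟪f, p - n⟫ := fun f => by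
    simp only [svInt, hrepro, hp, hn, inner_sub_right]
  refine ⟨p - n, ⟨hrep, fun u => ?_⟩, fun m hm => ext_inner_left ℝ fun f => ?_⟩
  · have hsection : (fun x => k u x) = T (Φ u) := by
      ext x
      rw [hk, hrepro]
    rw [hsection, hrep, hrepro, real_inner_comm]
  · rw [← hm.1, hrep]
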